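/- arXiv:2201.10540 — 3 statements merged into one kernel-verified Lean document; each statement's English description precedes it below -/
import Mathlib

section
/- Let γ ∈ (1,2), let I = (−∞,0) or I = (0,∞), and let G ∈ C_c^2(ℝ*), with b_G > 0 such that G(u) = 0 whenever |u| ≥ b_G. Then for every u ∈ I the limit lim_{ε→0⁺} [−(−Δ)_I^{γ/2}G]_ε(u) exists, and there exists H ∈ L¹(I) such that |[−(−Δ)_I^{γ/2}G]_ε(u)| ≤ H(u) for every u ∈ I and every ε ∈ (0, b_G). -/
open MeasureTheory Filter Set Topology

/-- Transition probability `p(z) = c⋅|z|^{-γ-1}` for `z ≠ 0`, `p(0)=0`. -/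
noncomputable def transP (c γ : ℝ) (z : ℤ) : ℝ :=
  if z = 0 then 0 else c * |(z : ℝ)| ^ (-γ - 1)

/-- Truncated regional fractional Laplacian `[−(−Δ)_I^{γ/2}G]_ε(u)`. -/
noncomputable def regFracLapTrunc (c γ : ℝ) (I : Set ℝ) (G : ℝ → ℝ) (ε u : ℝ) : ℝ :=
  c * ∫ v in I ∩ {v : ℝ | ε ≤ |u - v|}, (G v - G u) / |u - v| ^ (γ + 1)

/-- `G ∈ C_c^2(ℝ*)`: `G(u) = G₋(u)1_{u<0} + G₊(u)1_{u≥0}` with `G₋, G₊` twice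
continuously differentiable with compact support. -/
def CcTwoStar (G : ℝ → ℝ) : Prop :=
  ∃ Gm Gp : ℝ → ℝ, ContDiff ℝ 2 Gm ∧ HasCompactSupport Gm ∧
    ContDiff ℝ 2 Gp ∧ HasCompactSupport Gp ∧
    ∀ u : ℝ, G u = if u < 0 then Gm u else Gp u

/-!
For `u ∈ I` let `r = |u|`, so that `(u - r, u + r) ⊆ I`. Subtracting the Taylor term
`G'(u) (v - u)` from `G v - G u` on this interval does not change the truncated integral, because
the subtracted kernel is odd about `u`. The compensated integrand is at most `K |v - u| ^ (1 - γ)`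
for `|v - u| < r`, by Taylor's formula, and at most `C |v - u| ^ (-γ / 2 - 1)` for `|v - u| ≥ r`,
because `G` is `γ / 2`-Hölder. It is therefore integrable, so the limit exists by dominated
convergence, and its integral is at most a constant times `r ^ (2 - γ) + r ^ (-γ / 2)`, which is
integrable near `0` for every `γ ∈ (0, 2)`. If `G` vanishes outside `(-b, b)` and `r ≥ 2 b`, the
truncated integral is at most a constant times `r ^ (-γ - 1)`, which is integrable near infinity.
-/

open Metric
open scoped NNReal

section Integrals

theorem integrable_comp_abs_of_integrableOn_Ioi {E : Type*} [NormedAddCommGroup E] {f : ℝ → E}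
    (hf : IntegrableOn f (Ioi 0)) : Integrable fun x => f |x| := by
  have hpos : IntegrableOn (fun x => f |x|) (Ioi 0) :=
    hf.congr_fun (fun x hx => by rw [abs_of_pos hx]) measurableSet_Ioi
  have hneg : IntegrableOn (fun x => f |x|) (Iio 0) := by
    simpa only [abs_neg, neg_Ioi, neg_zero] using hpos.comp_neg
  rw [← integrableOn_univ, ← Iic_union_Ioi (a := (0 : ℝ)), integrableOn_union,
    integrableOn_Iic_iff_integrableOn_Iio]
  exact ⟨hneg, hpos⟩

theorem setIntegral_eq_zero_of_comp_eq_neg {α E : Type*} [MeasurableSpace α] {μ : Measure α}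
    [NormedAddCommGroup E] [NormedSpace ℝ E] {σ : α → α} {s : Set α} {f : α → E}
    (hσ : MeasurePreserving σ μ μ) (hσe : MeasurableEmbedding σ) (hs : σ ⁻¹' s = s)
    (hf : ∀ x, f (σ x) = -f x) : ∫ x in s, f x ∂μ = 0 := by
  have h : ∫ x in s, f x ∂μ = -∫ x in s, f x ∂μ := by
    calc ∫ x in s, f x ∂μ = ∫ x in σ ⁻¹' s, f (σ x) ∂μ :=
          (hσ.setIntegral_preimage_emb hσe f s).symm
      _ = -∫ x in s, f x ∂μ := by simp only [hs, hf, integral_neg]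
  have : IsAddTorsionFree E := .of_isTorsionFree ℝ E
  exact self_eq_neg.1 h

theorem measurableSet_le_dist {X : Type*} [PseudoMetricSpace X] [MeasurableSpace X]
    [OpensMeasurableSpace X] (x : X) (ε : ℝ) : MeasurableSet {y | ε ≤ dist x y} :=
  (isClosed_le continuous_const (continuous_const.dist continuous_id)).measurableSet

variable {X : Type*} [MetricSpace X] [MeasurableSpace X] [OpensMeasurableSpace X]

theorem aecover_le_dist (μ : Measure X) [NullSingletonClass μ] (x : X) :
    AECover μ (𝓝[>] (0 : ℝ)) fun ε => {y | ε ≤ dist x y} where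
  ae_eventually_mem := by
    filter_upwards [μ.ae_ne x] with y hy
    filter_upwards [Ioc_mem_nhdsGT (dist_pos.2 hy.symm)] with ε hε using hε.2
  measurableSet := measurableSet_le_dist x

theorem tendsto_setIntegral_inter_le_dist {E : Type*} [NormedAddCommGroup E] [NormedSpace ℝ E]
    {μ : Measure X} [NullSingletonClass μ] {s : Set X} {f : X → E} (hf : IntegrableOn f s μ)
    (x : X) :
    Tendsto (fun ε => ∫ y in s ∩ {y | ε ≤ dist x y}, f y ∂μ) (𝓝[>] (0 : ℝ))
      (𝓝 (∫ y in s, f y ∂μ)) := by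
  have h := (aecover_le_dist (μ.restrict s) x).integral_tendsto_of_countably_generated hf
  simpa only [Measure.restrict_restrict (measurableSet_le_dist x _), inter_comm _ s] using h

end Integrals

section BrokenPowerLaw

/-- The function equal to `K x ^ p` for `x < R` and to `L x ^ q` for `x ≥ R`. It serves as a
majorant both of the compensated kernel, `x` being the distance to its singularity, and of the
truncated operator, `x` being the distance to the origin. -/
noncomputable def brokenPowerLaw (R K p L q x : ℝ) : ℝ :=
  if x < R then K * x ^ p else L * x ^ q

variable {R p q : ℝ} (K L : ℝ)

theorem brokenPowerLaw_eqOn_Ioo : EqOn (brokenPowerLaw R K p L q) (fun x => K * x ^ p) (Ioo 0 R) :=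
  fun _ hx => if_pos hx.2

theorem brokenPowerLaw_eqOn_Ici : EqOn (brokenPowerLaw R K p L q) (fun x => L * x ^ q) (Ici R) :=
  fun _ hx => if_neg (not_lt.2 hx)

theorem integrableOn_Ioo_brokenPowerLaw (hR : 0 < R) (hp : -1 < p) :
    IntegrableOn (brokenPowerLaw R K p L q) (Ioo 0 R) :=
  IntegrableOn.congr_fun (((intervalIntegral.integrableOn_Ioo_rpow_iff hR).2 hp).const_mul K)
    (brokenPowerLaw_eqOn_Ioo K L).symm measurableSet_Ioo

theorem integrableOn_Ici_brokenPowerLaw (hR : 0 < R) (hq : q < -1) :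
    IntegrableOn (brokenPowerLaw R K p L q) (Ici R) := by
  rw [integrableOn_congr_fun (brokenPowerLaw_eqOn_Ici K L) measurableSet_Ici,
    integrableOn_Ici_iff_integrableOn_Ioi]
  exact (integrableOn_Ioi_rpow_of_lt hq hR).const_mul L

theorem integrable_brokenPowerLaw_abs (hR : 0 < R) (hp : -1 < p) (hq : q < -1) :
    Integrable fun x => brokenPowerLaw R K p L q |x| := by
  refine integrable_comp_abs_of_integrableOn_Ioi ?_
  rw [← Ioo_union_Ici_eq_Ioi hR]
  exact (integrableOn_Ioo_brokenPowerLaw K L hR hp).union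
    (integrableOn_Ici_brokenPowerLaw K L hR hq)

theorem setIntegral_Ioi_brokenPowerLaw (hR : 0 < R) (hp : -1 < p) (hq : q < -1) :
    ∫ x in Ioi 0, brokenPowerLaw R K p L q x =
      K * (R ^ (p + 1) / (p + 1)) - L * (R ^ (q + 1) / (q + 1)) := by
  have hbelow : ∫ x in Ioo 0 R, x ^ p = R ^ (p + 1) / (p + 1) := by
    rw [← integral_Ioc_eq_integral_Ioo, ← intervalIntegral.integral_of_le hR.le,
      integral_rpow (Or.inl hp), Real.zero_rpow (by linarith), sub_zero]
  have habove : ∫ x in Ici R, x ^ q = -(R ^ (q + 1) / (q + 1)) := by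
    rw [integral_Ici_eq_integral_Ioi, integral_Ioi_rpow_of_lt hq hR, neg_div]
  rw [← Ioo_union_Ici_eq_Ioi hR,
    setIntegral_union ((Iio_disjoint_Ici le_rfl).mono_left Ioo_subset_Iio_self) measurableSet_Ici
      (integrableOn_Ioo_brokenPowerLaw K L hR hp) (integrableOn_Ici_brokenPowerLaw K L hR hq),
    setIntegral_congr_fun measurableSet_Ioo (brokenPowerLaw_eqOn_Ioo K L),
    setIntegral_congr_fun measurableSet_Ici (brokenPowerLaw_eqOn_Ici K L),
    integral_const_mul, integral_const_mul, hbelow, habove]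
  ring

end BrokenPowerLaw

section Smooth

variable {E F : Type*} [NormedAddCommGroup E] [NormedSpace ℝ E] [NormedAddCommGroup F]
  [NormedSpace ℝ F] {f : E → F}

theorem norm_sub_sub_fderiv_le_of_lipschitzWith {K : ℝ≥0} (hf : Differentiable ℝ f)
    (hK : LipschitzWith K (fderiv ℝ f)) (x y : E) :
    ‖f y - f x - fderiv ℝ f x (y - x)‖ ≤ K * ‖y - x‖ ^ 2 := by
  have hbound : ∀ z ∈ closedBall x ‖y - x‖, ‖fderiv ℝ f z - fderiv ℝ f x‖ ≤ K * ‖y - x‖ :=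
    fun z hz => by
      rw [← dist_eq_norm]
      exact hK.dist_le_mul_of_le hz
  have h := (convex_closedBall x ‖y - x‖).norm_image_sub_le_of_norm_fderiv_le'
    (fun z _ => hf z) hbound (mem_closedBall_self (norm_nonneg _))
    (mem_closedBall_iff_norm.2 le_rfl)
  rwa [mul_assoc, ← pow_two] at h

theorem exists_norm_sub_sub_fderiv_le_of_hasCompactSupport (hf : ContDiff ℝ 2 f)
    (hfc : HasCompactSupport f) :
    ∃ K : ℝ≥0, ∀ x y, ‖f y - f x - fderiv ℝ f x (y - x)‖ ≤ K * ‖y - x‖ ^ 2 := by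
  obtain ⟨K, hK⟩ := ContDiff.lipschitzWith_of_hasCompactSupport (hfc.fderiv ℝ)
    (hf.fderiv_right (m := 1) (by norm_num)) one_ne_zero
  exact ⟨K, norm_sub_sub_fderiv_le_of_lipschitzWith (hf.differentiable two_ne_zero) hK⟩

theorem memHolder_of_hasCompactSupport {α : ℝ≥0} (hα : α ≤ 1) (hf : ContDiff ℝ 1 f)
    (hfc : HasCompactSupport f) : MemHolder α f := by
  obtain ⟨L, hL⟩ := ContDiff.lipschitzWith_of_hasCompactSupport hfc hf one_ne_zero
  obtain ⟨M, hM⟩ := isBounded_range_iff.1 (hfc.isCompact_range hf.continuous).isBounded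
  have hzero : HolderWith M.toNNReal 0 f := fun x y => by
    rw [NNReal.coe_zero, ENNReal.rpow_zero, mul_one, edist_dist]
    exact ENNReal.ofReal_le_ofReal (hM x y)
  exact hzero.memHolder.memHolder_of_le_of_le (holderWith_one.2 hL).memHolder zero_le hα

end Smooth

section CompensatedKernel

/-- The kernel `(v - u) / |u - v| ^ (γ + 1)` cut off to the interval `(u - r, u + r)`. It is odd
about `u`. -/
noncomputable def oddKernel (γ r u : ℝ) : ℝ → ℝ :=
  (ball u r).indicator fun v => (v - u) / |u - v| ^ (γ + 1)

/-- The integrand of the regional fractional Laplacian of `F` at `u`, compensated on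
`(u - r, u + r)` by the linear function of slope `m`, which for differentiable `F` is the derivative
at `u`. -/
noncomputable def compensatedKernel (γ m r : ℝ) (F : ℝ → ℝ) (u v : ℝ) : ℝ :=
  (F v - F u) / |u - v| ^ (γ + 1) - m * oddKernel γ r u v

variable {c γ α m r u ε : ℝ} {K C : ℝ≥0} {F : ℝ → ℝ} {I : Set ℝ}

theorem setIntegral_oddKernel_eq_zero (hI : ball u r ⊆ I) (γ ε : ℝ) :
    ∫ v in I ∩ {v | ε ≤ |u - v|}, oddKernel γ r u v = 0 := by
  have hrefl : ∀ v, u - (2 * u - v) = v - u := fun v => by ring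
  rw [oddKernel, setIntegral_indicator measurableSet_ball, inter_right_comm,
    inter_eq_right.2 hI]
  refine setIntegral_eq_zero_of_comp_eq_neg (σ := fun v => 2 * u - v)
    (volume.measurePreserving_sub_left (2 * u))
    (MeasurableEquiv.subLeft (2 * u)).measurableEmbedding ?_ fun v => ?_
  · ext v
    simp only [mem_preimage, mem_inter_iff, mem_ball', Real.dist_eq, mem_ofPred_eq, hrefl,
      abs_sub_comm v u]
  · rw [hrefl, abs_sub_comm v u]
    ring

theorem integrableOn_oddKernel (γ r u : ℝ) (hε : 0 < ε) :
    IntegrableOn (oddKernel γ r u) {v | ε ≤ |u - v|} := by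
  have hcompact : IsCompact (closedBall u r ∩ {v | ε ≤ |u - v|}) :=
    (isCompact_closedBall u r).inter_right (isClosed_le (by fun_prop) (by fun_prop))
  have hcont : ContinuousOn (fun v => (v - u) / |u - v| ^ (γ + 1))
      (closedBall u r ∩ {v | ε ≤ |u - v|}) := by
    have hpos : ∀ v ∈ closedBall u r ∩ {v | ε ≤ |u - v|}, 0 < |u - v| :=
      fun v hv => hε.trans_le hv.2
    exact ContinuousOn.div (by fun_prop)
      (ContinuousOn.rpow_const (by fun_prop) fun v hv => Or.inl (hpos v hv).ne')
      fun v hv => (Real.rpow_pos_of_pos (hpos v hv) _).ne'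
  rw [oddKernel, integrableOn_indicator_iff measurableSet_ball]
  exact (hcont.integrableOn_compact hcompact).mono_set
    (inter_subset_inter_left _ ball_subset_closedBall)

theorem measurable_compensatedKernel (hF : Measurable F) (γ m r u : ℝ) :
    Measurable (compensatedKernel γ m r F u) := by
  unfold compensatedKernel oddKernel
  exact Measurable.sub (by fun_prop)
    (((by fun_prop : Measurable _).indicator measurableSet_ball).const_mul m)

theorem abs_compensatedKernel_le (hr : 0 < r)
    (hnear : ∀ v ∈ ball u r, |F v - F u - m * (v - u)| ≤ K * |v - u| ^ 2)
    (hfar : ∀ v, |F v - F u| ≤ C * |v - u| ^ α) (v : ℝ) :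
    |compensatedKernel γ m r F u v| ≤
      brokenPowerLaw r K (1 - γ) C (α - γ - 1) |v - u| := by
  rcases eq_or_ne v u with rfl | hvu
  · have hzero : compensatedKernel γ m r F v v = 0 := by
      simp [compensatedKernel, oddKernel]
    simp only [hzero, sub_self, abs_zero, brokenPowerLaw, if_pos hr]
    positivity
  have hx : 0 < |v - u| := abs_pos.2 (sub_ne_zero.2 hvu)
  rcases lt_or_ge |v - u| r with h | h
  · have hball : v ∈ ball u r := h
    calc |compensatedKernel γ m r F u v|
        = |F v - F u - m * (v - u)| / |v - u| ^ (γ + 1) := by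
          rw [compensatedKernel, oddKernel, indicator_of_mem hball, ← mul_div_assoc, ← sub_div,
            abs_div, abs_sub_comm u v, abs_of_pos (Real.rpow_pos_of_pos hx _)]
      _ ≤ K * |v - u| ^ 2 / |v - u| ^ (γ + 1) := by gcongr; exact hnear v hball
      _ = K * |v - u| ^ (1 - γ) := by
          rw [mul_div_assoc, ← Real.rpow_two, ← Real.rpow_sub hx]
          ring_nf
      _ = brokenPowerLaw r K (1 - γ) C (α - γ - 1) |v - u| := (if_pos h).symm
  · have hball : v ∉ ball u r := not_lt.2 h
    calc |compensatedKernel γ m r F u v| = |F v - F u| / |v - u| ^ (γ + 1) := by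
          rw [compensatedKernel, oddKernel, indicator_of_notMem hball, mul_zero, sub_zero, abs_div,
            abs_sub_comm u v, abs_of_pos (Real.rpow_pos_of_pos hx _)]
      _ ≤ C * |v - u| ^ α / |v - u| ^ (γ + 1) := by gcongr; exact hfar v
      _ = C * |v - u| ^ (α - γ - 1) := by
          rw [mul_div_assoc, ← Real.rpow_sub hx, sub_add_eq_sub_sub]
      _ = brokenPowerLaw r K (1 - γ) C (α - γ - 1) |v - u| := (if_neg (not_lt.2 h)).symm

theorem integrable_compensatedKernel (hα : α < γ) (hγ : γ < 2) (hF : Measurable F) (hr : 0 < r)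
    (hnear : ∀ v ∈ ball u r, |F v - F u - m * (v - u)| ≤ K * |v - u| ^ 2)
    (hfar : ∀ v, |F v - F u| ≤ C * |v - u| ^ α) :
    Integrable (compensatedKernel γ m r F u) := by
  have hmajorant :=
    integrable_brokenPowerLaw_abs (p := 1 - γ) (q := α - γ - 1) K C hr (by linarith) (by linarith)
  exact (hmajorant.comp_sub_right u).mono'
    (measurable_compensatedKernel hF γ m r u).aestronglyMeasurable
    (.of_forall (abs_compensatedKernel_le hr hnear hfar))

theorem regFracLapTrunc_eq_setIntegral_compensatedKernel (c : ℝ)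
    (hint : IntegrableOn (compensatedKernel γ m r F u) I) (hI : ball u r ⊆ I) (hε : 0 < ε) :
    regFracLapTrunc c γ I F ε u =
      c * ∫ v in I ∩ {v | ε ≤ |u - v|}, compensatedKernel γ m r F u v := by
  have hodd : IntegrableOn (fun v => m * oddKernel γ r u v) (I ∩ {v | ε ≤ |u - v|}) :=
    ((integrableOn_oddKernel γ r u hε).mono_set inter_subset_right).const_mul m
  have hsplit : ∀ v, (F v - F u) / |u - v| ^ (γ + 1) =
      compensatedKernel γ m r F u v + m * oddKernel γ r u v :=
    fun v => (sub_add_cancel _ _).symm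
  simp only [regFracLapTrunc, hsplit]
  rw [integral_add (hint.mono_set inter_subset_left) hodd, integral_const_mul,
    setIntegral_oddKernel_eq_zero hI, mul_zero, add_zero]

theorem tendsto_regFracLapTrunc (c : ℝ) (hint : IntegrableOn (compensatedKernel γ m r F u) I)
    (hI : ball u r ⊆ I) :
    Tendsto (fun ε => regFracLapTrunc c γ I F ε u) (𝓝[>] 0)
      (𝓝 (c * ∫ v in I, compensatedKernel γ m r F u v)) := by
  refine ((tendsto_setIntegral_inter_le_dist hint u).const_mul c).congr' ?_
  filter_upwards [self_mem_nhdsWithin] with ε hε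
  exact (regFracLapTrunc_eq_setIntegral_compensatedKernel c hint hI hε).symm

theorem abs_regFracLapTrunc_le (c : ℝ) (hα : α < γ) (hγ : γ < 2) (hF : Measurable F) (hr : 0 < r)
    (hnear : ∀ v ∈ ball u r, |F v - F u - m * (v - u)| ≤ K * |v - u| ^ 2)
    (hfar : ∀ v, |F v - F u| ≤ C * |v - u| ^ α) (hI : ball u r ⊆ I) (hε : 0 < ε) :
    |regFracLapTrunc c γ I F ε u| ≤
      |c| * (2 * (K * (r ^ (2 - γ) / (2 - γ)) + C * (r ^ (α - γ) / (γ - α)))) := by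
  set g := brokenPowerLaw r K (1 - γ) C (α - γ - 1) with hg
  have hbound : ∀ v, ‖compensatedKernel γ m r F u v‖ ≤ g |v - u| :=
    abs_compensatedKernel_le hr hnear hfar
  have hgint : Integrable fun v => g |v - u| :=
    (integrable_brokenPowerLaw_abs _ _ hr (by linarith) (by linarith)).comp_sub_right u
  have hgval : ∫ v, g |v - u| =
      2 * (K * (r ^ (2 - γ) / (2 - γ)) + C * (r ^ (α - γ) / (γ - α))) := by
    rw [integral_sub_right_eq_self (fun x => g |x|), integral_comp_abs, hg,
      setIntegral_Ioi_brokenPowerLaw _ _ hr (by linarith) (by linarith),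
      show 1 - γ + 1 = 2 - γ by ring, sub_add_cancel, ← neg_sub γ α, div_neg]
    ring
  have hint := integrable_compensatedKernel hα hγ hF hr hnear hfar
  rw [regFracLapTrunc_eq_setIntegral_compensatedKernel c hint.integrableOn hI hε, abs_mul, ← hgval]
  gcongr
  calc |∫ v in I ∩ {v | ε ≤ |u - v|}, compensatedKernel γ m r F u v|
      ≤ ∫ v in I ∩ {v | ε ≤ |u - v|}, g |v - u| :=
        norm_integral_le_of_norm_le hgint.integrableOn (.of_forall hbound)
    _ ≤ ∫ v, g |v - u| :=
        setIntegral_le_integral hgint (.of_forall fun v => (norm_nonneg _).trans (hbound v))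

end CompensatedKernel

section RegFracLap

variable {c γ u : ℝ} {F G : ℝ → ℝ} {I : Set ℝ}

theorem regFracLapTrunc_congr (hI : MeasurableSet I) (h : EqOn F G I) (hu : u ∈ I) (c γ ε : ℝ) :
    regFracLapTrunc c γ I F ε u = regFracLapTrunc c γ I G ε u := by
  refine congrArg (c * ·)
    (setIntegral_congr_fun (hI.inter (measurableSet_le_dist u ε)) fun v hv => ?_)
  simp only [h hv.1, h hu]

theorem abs_regFracLapTrunc_le_of_eq_zero (c ε : ℝ) (hγ : -1 ≤ γ) (hF : Integrable F)
    (hFu : ∀ v, |u| / 2 ≤ |v| → F v = 0) :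
    |regFracLapTrunc c γ I F ε u| ≤ |c| * ((∫ v, |F v|) / (|u| / 2) ^ (γ + 1)) := by
  have hu : F u = 0 := hFu u (half_le_self (abs_nonneg u))
  have hbound : ∀ v, ‖(F v - F u) / |u - v| ^ (γ + 1)‖ ≤ |F v| / (|u| / 2) ^ (γ + 1) := fun v => by
    rw [Real.norm_eq_abs]
    rcases le_or_gt (|u| / 2) |v| with hv | hv
    · simp only [hFu v hv, hu, sub_self, zero_div, abs_zero, le_refl]
    · have hpos : 0 < |u| / 2 := by linarith [abs_nonneg v]
      have hdist : |u| / 2 ≤ |u - v| := by linarith [abs_sub_abs_le_abs_sub u v]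
      rw [hu, sub_zero, abs_div, abs_of_nonneg (by positivity : 0 ≤ |u - v| ^ (γ + 1))]
      gcongr
      linarith
  have hint : Integrable fun v => |F v| / (|u| / 2) ^ (γ + 1) := hF.abs.div_const _
  rw [regFracLapTrunc, abs_mul, ← integral_div]
  gcongr
  exact (norm_integral_le_of_norm_le hint.integrableOn (.of_forall hbound)).trans
    (setIntegral_le_integral hint (.of_forall fun v => by positivity))

theorem exists_abs_sub_sub_deriv_mul_le (hF : ContDiff ℝ 2 F) (hFc : HasCompactSupport F) :
    ∃ K : ℝ≥0, ∀ u v, |F v - F u - deriv F u * (v - u)| ≤ K * |v - u| ^ 2 := by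
  simpa only [fderiv_eq_smul_deriv, smul_eq_mul, mul_comm (deriv F _), Real.norm_eq_abs] using
    exists_norm_sub_sub_fderiv_le_of_hasCompactSupport hF hFc

theorem exists_abs_sub_le_mul_rpow {α : ℝ} (hα : α ∈ Icc (0 : ℝ) 1) (hF : ContDiff ℝ 1 F)
    (hFc : HasCompactSupport F) : ∃ C : ℝ≥0, ∀ u v, |F v - F u| ≤ C * |v - u| ^ α := by
  lift α to ℝ≥0 using hα.1
  obtain ⟨C, hC⟩ := memHolder_of_hasCompactSupport (by exact_mod_cast hα.2) hF hFc
  exact ⟨C, fun u v => hC.dist_le v u⟩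

theorem exists_tendsto_regFracLapTrunc (c : ℝ) (hγ : γ ∈ Ioo (0 : ℝ) 2) (hF : ContDiff ℝ 2 F)
    (hFc : HasCompactSupport F) (hI : I ∈ 𝓝 u) :
    ∃ L, Tendsto (fun ε => regFracLapTrunc c γ I F ε u) (𝓝[>] 0) (𝓝 L) := by
  obtain ⟨hγ₀, hγ₂⟩ := hγ
  obtain ⟨r, hr, hball⟩ := Metric.mem_nhds_iff.1 hI
  obtain ⟨K, hK⟩ := exists_abs_sub_sub_deriv_mul_le hF hFc
  obtain ⟨C, hC⟩ := exists_abs_sub_le_mul_rpow (α := γ / 2) ⟨by linarith, by linarith⟩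
    (hF.of_le one_le_two) hFc
  have hint := integrable_compensatedKernel (half_lt_self hγ₀) hγ₂ hF.continuous.measurable hr
    (fun v _ => hK u v) (hC u)
  exact ⟨_, tendsto_regFracLapTrunc c hint.integrableOn hball⟩

theorem exists_integrable_abs_regFracLapTrunc_le (c : ℝ) (hγ : γ ∈ Ioo (0 : ℝ) 2)
    (hF : ContDiff ℝ 2 F) (hFc : HasCompactSupport F) (hI₀ : 0 ∉ I)
    (hI : ∀ u ∈ I, ball u |u| ⊆ I) :
    ∃ H : ℝ → ℝ, Integrable H ∧ ∀ u ∈ I, ∀ ε > 0, |regFracLapTrunc c γ I F ε u| ≤ H u := by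
  obtain ⟨hγ₀, hγ₂⟩ := hγ
  obtain ⟨K, hK⟩ := exists_abs_sub_sub_deriv_mul_le hF hFc
  obtain ⟨C, hC⟩ := exists_abs_sub_le_mul_rpow (α := γ / 2) ⟨by linarith, by linarith⟩
    (hF.of_le one_le_two) hFc
  obtain ⟨b, hb, hFb⟩ := hFc.exists_pos_le_norm
  have hFint : Integrable F := hF.continuous.integrable_of_hasCompactSupport hFc
  refine ⟨fun u =>
    brokenPowerLaw (2 * b) (|c| * 2 * K / (2 - γ)) (2 - γ) 0 (-γ - 1) |u| +
    brokenPowerLaw (2 * b) (|c| * 2 * C / (γ / 2)) (-(γ / 2))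
      (|c| * (∫ v, |F v|) * 2 ^ (γ + 1)) (-γ - 1) |u|,
    (integrable_brokenPowerLaw_abs _ _ (by linarith) (by linarith) (by linarith)).add
      (integrable_brokenPowerLaw_abs _ _ (by linarith) (by linarith) (by linarith)),
    fun u hu ε hε => ?_⟩
  have hu₀ : 0 < |u| := abs_pos.2 (ne_of_mem_of_not_mem hu hI₀)
  rcases lt_or_ge |u| (2 * b) with hub | hub
  · refine (abs_regFracLapTrunc_le c (half_lt_self hγ₀) hγ₂ hF.continuous.measurable hu₀
      (fun v _ => hK u v) (hC u) (hI u hu) hε).trans_eq ?_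
    simp only [brokenPowerLaw, if_pos hub]
    rw [show γ / 2 - γ = -(γ / 2) by ring, sub_half]
    ring
  · refine (abs_regFracLapTrunc_le_of_eq_zero c ε (by linarith) hFint
      fun v hv => hFb v (by rw [Real.norm_eq_abs]; linarith)).trans_eq ?_
    simp only [brokenPowerLaw, if_neg hub.not_gt]
    rw [Real.div_rpow hu₀.le zero_le_two, ← neg_add', Real.rpow_neg hu₀.le]
    field_simp
    ring

end RegFracLap

section HalfLine

variable {γ : ℝ} {G : ℝ → ℝ} {I : Set ℝ}

theorem ball_abs_subset_of_mem_halfLine (hI : I = Iio 0 ∨ I = Ioi 0) {u : ℝ} (hu : u ∈ I) :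
    ball u |u| ⊆ I := by
  intro v hv
  rw [mem_ball, Real.dist_eq, abs_lt] at hv
  rcases hI with rfl | rfl
  · rw [abs_of_neg hu] at hv
    exact mem_Iio.2 (by linarith)
  · rw [abs_of_pos hu] at hv
    exact mem_Ioi.2 (by linarith)

theorem CcTwoStar.exists_contDiff_eqOn (hG : CcTwoStar G) (hI : I = Iio 0 ∨ I = Ioi 0) :
    ∃ F : ℝ → ℝ, ContDiff ℝ 2 F ∧ HasCompactSupport F ∧ EqOn G F I := by
  obtain ⟨Gm, Gp, hGm, hGmc, hGp, hGpc, hG⟩ := hG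
  rcases hI with rfl | rfl
  · exact ⟨Gm, hGm, hGmc, fun u hu => by rw [hG, if_pos (mem_Iio.1 hu)]⟩
  · exact ⟨Gp, hGp, hGpc, fun u hu => by rw [hG, if_neg (lt_asymm (mem_Ioi.1 hu))]⟩

theorem stmt1_general (c : ℝ) (hγ : γ ∈ Ioo (0 : ℝ) 2) (hI : I = Iio 0 ∨ I = Ioi 0)
    (hG : CcTwoStar G) :
    (∀ u ∈ I, ∃ L, Tendsto (fun ε => regFracLapTrunc c γ I G ε u) (𝓝[>] 0) (𝓝 L)) ∧
    ∃ H : ℝ → ℝ, IntegrableOn H I ∧ ∀ u ∈ I, ∀ ε > 0, |regFracLapTrunc c γ I G ε u| ≤ H u := by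
  obtain ⟨F, hF, hFc, hGF⟩ := hG.exists_contDiff_eqOn hI
  have hopen : IsOpen I := hI.elim (· ▸ isOpen_Iio) (· ▸ isOpen_Ioi)
  have hI₀ : 0 ∉ I := hI.elim (· ▸ self_notMem_Iio) (· ▸ self_notMem_Ioi)
  have hcongr : ∀ u ∈ I, ∀ ε, regFracLapTrunc c γ I G ε u = regFracLapTrunc c γ I F ε u :=
    fun u hu => regFracLapTrunc_congr hopen.measurableSet hGF hu c γ
  obtain ⟨H, hH, hle⟩ := exists_integrable_abs_regFracLapTrunc_le c hγ hF hFc hI₀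
    fun u => ball_abs_subset_of_mem_halfLine hI
  refine ⟨fun u hu => ?_, H, hH.integrableOn, fun u hu ε hε => ?_⟩
  · simpa only [hcongr u hu] using
      exists_tendsto_regFracLapTrunc c hγ hF hFc (hopen.mem_nhds hu)
  · rw [hcongr u hu]
    exact hle u hu ε hε

end HalfLine

theorem stmt1 (γ c : ℝ) (hγ : γ ∈ Set.Ioo (1 : ℝ) 2) (hc : 0 < c)
    (hprob : HasSum (transP c γ) 1)
    (I : Set ℝ) (hI : I = Set.Iio (0 : ℝ) ∨ I = Set.Ioi (0 : ℝ))
    (G : ℝ → ℝ) (hG : CcTwoStar G)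
    (bG : ℝ) (hbG : 0 < bG) (hGb : ∀ u : ℝ, bG ≤ |u| → G u = 0) :
    (∀ u ∈ I, ∃ L : ℝ,
        Tendsto (fun ε => regFracLapTrunc c γ I G ε u) (𝓝[>] (0 : ℝ)) (𝓝 L)) ∧
    ∃ H : ℝ → ℝ, IntegrableOn H I ∧
      ∀ u ∈ I, ∀ ε ∈ Set.Ioo (0 : ℝ) bG, |regFracLapTrunc c γ I G ε u| ≤ H u := by
  obtain ⟨hlim, H, hH, hle⟩ := stmt1_general c (Ioo_subset_Ioo_left zero_le_one hγ) hI hG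
  exact ⟨hlim, H, hH, fun u hu ε hε => hle u hu ε hε.1⟩
end

section
/- Let γ ∈ (0,2) and let ρ : ℝ → ℝ be an essentially bounded measurable function such that ∬_{ℝ×ℝ} (ρ(u)−ρ(v))²/|u−v|^{1+γ} du dv < ∞. Then for every G : ℝ → ℝ twice continuously differentiable with compact support, ∫_ℝ ρ(u) [−(−Δ)^{γ/2}G](u) du = −(c_γ/2) ∬_{ℝ×ℝ} (G(u)−G(v))(ρ(u)−ρ(v))/|u−v|^{1+γ} du dv. -/
open MeasureTheory Filter Set Topology

/-- Truncated fractional Laplacian `[−(−Δ)^{γ/2}G]_ε(u)`. -/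
noncomputable def fracLapTrunc (c γ : ℝ) (G : ℝ → ℝ) (ε u : ℝ) : ℝ :=
  c * ∫ v in {v : ℝ | ε ≤ |u - v|}, (G v - G u) / |u - v| ^ (γ + 1)

/-!
The kernel `k z = c / |z| ^ (1 + γ)` is a symmetric Lévy kernel: it is even, and `min 1 |z|² * k z`
is integrable. Evenness rewrites the principal value as an integral of second differences
`G (u + z) + G (u - z) - 2 G u`. Their `L¹` norm in `u` is `O(min 1 |z|²)`: near `z = 0` because `G`
has a Lipschitz derivative and compact support, far away by the triangle inequality. Hence the
pairing with a bounded `ρ` converges absolutely, and Fubini allows integrating in `u` first. For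
fixed `z`, translation invariance gives
`∫ (G u - G (u + z)) (ρ u - ρ (u + z)) du = -∫ ρ u (G (u + z) + G (u - z) - 2 G u) du`, and
integrating against `k z` yields the Dirichlet form, which converges absolutely because `ρ` and `G`
have finite energy.
-/

variable {E F : Type*} [NormedAddCommGroup E] [NormedAddCommGroup F]

/-- The symmetric second difference `G (u + z) + G (u - z) - 2 G u`, written as a sum of two first
differences so that no scalar multiplication is involved. -/
def secondDiff (G : E → F) (u z : E) : F := (G (u + z) - G u) + (G (u - z) - G u)

section SecondDiff

variable {G : E → F}

theorem continuous_secondDiff (hG : Continuous G) :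
    Continuous fun q : E × E => secondDiff G q.1 q.2 := by
  unfold secondDiff
  fun_prop

theorem norm_secondDiff_le_of_lipschitzWith_fderiv [NormedSpace ℝ E] [NormedSpace ℝ F] {M : NNReal}
    (hG : Differentiable ℝ G) (hG' : LipschitzWith M (fderiv ℝ G)) (u z : E) :
    ‖secondDiff G u z‖ ≤ 2 * M * ‖z‖ ^ 2 := by
  have hderiv (t : ℝ) : HasDerivAt (fun t : ℝ => G (u + t • z) + G (u - t • z))
      ((fderiv ℝ G (u + t • z) - fderiv ℝ G (u - t • z)) z) t := by
    have hline : HasDerivAt (fun t : ℝ => t • z) z t := by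
      simpa using (hasDerivAt_id t).smul_const z
    have hfwd := (hG (u + t • z)).hasFDerivAt.comp_hasDerivAt t (hline.const_add u)
    have hbwd := (hG (u - t • z)).hasFDerivAt.comp_hasDerivAt t (hline.const_sub u)
    simpa [sub_eq_add_neg, Function.comp_def] using hfwd.fun_add hbwd
  have hbound (t : ℝ) (ht : t ∈ Ico (0 : ℝ) 1) :
      ‖(fderiv ℝ G (u + t • z) - fderiv ℝ G (u - t • z)) z‖ ≤ 2 * M * ‖z‖ ^ 2 := by
    have hstep : ‖(u + t • z) - (u - t • z)‖ ≤ 2 * ‖z‖ := by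
      rw [show (u + t • z) - (u - t • z) = (2 * t) • z by module, norm_smul,
        Real.norm_of_nonneg (by linarith [ht.1])]
      gcongr
      linarith [ht.2]
    calc ‖(fderiv ℝ G (u + t • z) - fderiv ℝ G (u - t • z)) z‖
        ≤ ‖fderiv ℝ G (u + t • z) - fderiv ℝ G (u - t • z)‖ * ‖z‖ :=
          ContinuousLinearMap.le_opNorm _ _
      _ ≤ M * (2 * ‖z‖) * ‖z‖ := by
          gcongr
          exact (hG'.norm_sub_le _ _).trans (by gcongr)
      _ = 2 * M * ‖z‖ ^ 2 := by ring
  have hmean := norm_image_sub_le_of_norm_deriv_le_segment_01'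
    (fun t _ => (hderiv t).hasDerivWithinAt) hbound
  convert hmean using 2
  simp only [secondDiff, one_smul, zero_smul, add_zero, sub_zero]
  abel

theorem secondDiff_eq_zero_of_notMem_cthickening {u z : E} {r : ℝ} (hz : ‖z‖ ≤ r)
    (hu : u ∉ Metric.cthickening r (tsupport G)) : secondDiff G u z = 0 := by
  have hzero (w : E) (hw : dist u w ≤ r) : G w = 0 :=
    image_eq_zero_of_notMem_tsupport fun h => hu (Metric.mem_cthickening_of_dist_le _ _ _ _ h hw)
  have hr : 0 ≤ r := (norm_nonneg z).trans hz
  simp [secondDiff, hzero u (by simpa), hzero (u + z) (by simpa), hzero (u - z) (by simpa)]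

variable [MeasurableSpace E] [BorelSpace E] {μ : Measure E} [μ.IsAddRightInvariant]

theorem integrable_secondDiff (hG : Integrable G μ) (z : E) :
    Integrable (fun u => secondDiff G u z) μ :=
  ((hG.comp_add_right z).sub hG).add ((hG.comp_sub_right z).sub hG)

theorem integral_norm_secondDiff_le (hG : Integrable G μ) (z : E) :
    ∫ u, ‖secondDiff G u z‖ ∂μ ≤ 4 * ∫ u, ‖G u‖ ∂μ := by
  have hadd := hG.norm.comp_add_right z
  have hsub := hG.norm.comp_sub_right z
  calc ∫ u, ‖secondDiff G u z‖ ∂μ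
      ≤ ∫ u, (‖G (u + z)‖ + ‖G u‖ + (‖G (u - z)‖ + ‖G u‖)) ∂μ :=
        integral_mono (integrable_secondDiff hG z).norm
          ((hadd.add hG.norm).add (hsub.add hG.norm)) fun u =>
            (norm_add_le _ _).trans (add_le_add (norm_sub_le _ _) (norm_sub_le _ _))
    _ = 4 * ∫ u, ‖G u‖ ∂μ := by
        rw [integral_add (by exact hadd.add hG.norm) (by exact hsub.add hG.norm),
          integral_add hadd hG.norm, integral_add hsub hG.norm,
          integral_add_right_eq_self (fun u => ‖G u‖),
          integral_sub_right_eq_self (fun u => ‖G u‖)]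
        ring

theorem exists_integral_norm_secondDiff_le_mul_min [NormedSpace ℝ E] [NormedSpace ℝ F]
    [ProperSpace E] [IsFiniteMeasureOnCompacts μ] {M : NNReal} (hG : Differentiable ℝ G)
    (hG' : LipschitzWith M (fderiv ℝ G)) (hGc : HasCompactSupport G) :
    ∃ K, ∀ z, ∫ u, ‖secondDiff G u z‖ ∂μ ≤ K * min 1 (‖z‖ ^ 2) := by
  have hGi : Integrable G μ := hG.continuous.integrable_of_hasCompactSupport hGc
  set S := Metric.cthickening 1 (tsupport G)
  have hS : IsCompact S := hGc.isCompact.cthickening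
  have hnear (z : E) (hz : ‖z‖ ≤ 1) :
      ∫ u, ‖secondDiff G u z‖ ∂μ ≤ μ.real S * (2 * M) * ‖z‖ ^ 2 := by
    calc ∫ u, ‖secondDiff G u z‖ ∂μ
        ≤ ∫ u, S.indicator (fun _ => 2 * M * ‖z‖ ^ 2) u ∂μ := by
          refine integral_mono (integrable_secondDiff hGi z).norm
            ((integrable_indicator_iff hS.measurableSet).2
              (integrableOn_const hS.measure_lt_top.ne)) fun u => ?_
          by_cases hu : u ∈ S
          · simpa [hu] using norm_secondDiff_le_of_lipschitzWith_fderiv hG hG' u z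
          · simp [hu, secondDiff_eq_zero_of_notMem_cthickening hz hu]
      _ = μ.real S * (2 * M) * ‖z‖ ^ 2 := by
          rw [integral_indicator_const _ hS.measurableSet, smul_eq_mul, ← mul_assoc]
  refine ⟨max (μ.real S * (2 * M)) (4 * ∫ u, ‖G u‖ ∂μ), fun z => ?_⟩
  rcases le_total ‖z‖ 1 with hz | hz
  · rw [min_eq_right (pow_le_one₀ (norm_nonneg z) hz)]
    exact (hnear z hz).trans (by gcongr; exact le_max_left _ _)
  · rw [min_eq_left (one_le_pow₀ hz), mul_one]
    exact (integral_norm_secondDiff_le hGi z).trans (le_max_right _ _)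

end SecondDiff

variable [MeasurableSpace E] [BorelSpace E] {μ : Measure E}

theorem integral_sub_mul_sub_eq_neg_integral_mul_secondDiff [μ.IsAddRightInvariant]
    {ρ G : E → ℝ} (hρ : AEStronglyMeasurable ρ μ) {C : ℝ} (hC : ∀ᵐ u ∂μ, |ρ u| ≤ C)
    (hG : Integrable G μ) (z : E) :
    ∫ u, (G u - G (u + z)) * (ρ u - ρ (u + z)) ∂μ = -∫ u, ρ u * secondDiff G u z ∂μ := by
  have hfwd : Integrable (fun u => ρ u * (G u - G (u + z))) μ :=
    (hG.sub (hG.comp_add_right z)).bdd_mul hρ hC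
  have hbwd : Integrable (fun u => ρ u * (G (u - z) - G u)) μ :=
    ((hG.comp_sub_right z).sub hG).bdd_mul hρ hC
  have hshift : ∫ u, ρ (u + z) * (G u - G (u + z)) ∂μ = ∫ u, ρ u * (G (u - z) - G u) ∂μ := by
    simpa using integral_add_right_eq_self (fun u => ρ u * (G (u - z) - G u)) z
  have hbwd_shift : Integrable (fun u => ρ (u + z) * (G u - G (u + z))) μ := by
    simpa using hbwd.comp_add_right z
  calc ∫ u, (G u - G (u + z)) * (ρ u - ρ (u + z)) ∂μ
      = ∫ u, (ρ u * (G u - G (u + z)) - ρ (u + z) * (G u - G (u + z))) ∂μ := by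
        congr 1 with u
        ring
    _ = ∫ u, (ρ u * (G u - G (u + z)) - ρ u * (G (u - z) - G u)) ∂μ := by
        rw [integral_sub hfwd hbwd_shift, hshift, ← integral_sub hfwd hbwd]
    _ = -∫ u, ρ u * secondDiff G u z ∂μ := by
        rw [← integral_neg]
        congr 1 with u
        rw [secondDiff]
        ring

/-- `k` is the density with respect to `μ` of a symmetric Lévy measure on `E`: the jump intensity of
a symmetric pure-jump Lévy process. -/
structure IsSymmLevyKernel (k : E → ℝ) (μ : Measure E) : Prop where
  measurable : Measurable k
  nonneg : ∀ z, 0 ≤ k z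
  even : ∀ z, k (-z) = k z
  integrable_min : Integrable (fun z => min 1 (‖z‖ ^ 2) * k z) μ

/-- The jump operator with kernel `k` and all jumps shorter than `ε` removed; for
`k z = c / |z| ^ (1 + γ)` on the real line it is `[-(-Δ)^{γ/2}]_ε`. -/
noncomputable def levyOpTrunc (μ : Measure E) (k G : E → ℝ) (ε : ℝ) (u : E) : ℝ :=
  ∫ v in {v | ε ≤ ‖u - v‖}, (G v - G u) * k (u - v) ∂μ

/-- The generator of the symmetric Lévy process with jump kernel `k`, in the symmetrized form
that replaces the principal value by an integral of second differences. -/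
noncomputable def levyOp (μ : Measure E) (k G : E → ℝ) (u : E) : ℝ :=
  1 / 2 * ∫ z, secondDiff G u z * k z ∂μ

/-- The integrand, at the pair `q` of points, of the Dirichlet form of the kernel `k`. -/
def dirichletIntegrand (k f g : E → ℝ) (q : E × E) : ℝ :=
  (f q.1 - f q.2) * (g q.1 - g q.2) * k (q.1 - q.2)

theorem aeCover_le_norm [NullSingletonClass μ] :
    AECover μ (𝓝[>] (0 : ℝ)) fun ε => {z : E | ε ≤ ‖z‖} where
  ae_eventually_mem := by
    filter_upwards [compl_mem_ae_iff.2 (measure_singleton (0 : E))] with z hz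
    exact nhdsWithin_le_nhds (Iic_mem_nhds (norm_pos_iff.2 hz))
  measurableSet ε := measurableSet_le measurable_const measurable_norm

namespace IsSymmLevyKernel

variable {k : E → ℝ}

section DirichletForm

variable [SecondCountableTopology E]

theorem integrable_dirichletIntegrand (hk : IsSymmLevyKernel k μ) {f g : E → ℝ}
    (hf : AEStronglyMeasurable f μ) (hg : AEStronglyMeasurable g μ)
    (hff : Integrable (dirichletIntegrand k f f) (μ.prod μ))
    (hgg : Integrable (dirichletIntegrand k g g) (μ.prod μ)) :
    Integrable (dirichletIntegrand k f g) (μ.prod μ) := by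
  refine (hff.add hgg).mono' (((hf.comp_fst.sub hf.comp_snd).mul
    (hg.comp_fst.sub hg.comp_snd)).mul ?_) (ae_of_all _ fun q => ?_)
  · exact (hk.measurable.comp (measurable_fst.sub measurable_snd)).aestronglyMeasurable
  · simp only [Pi.add_apply, dirichletIntegrand]
    rw [← add_mul, norm_mul, Real.norm_of_nonneg (hk.nonneg _), Real.norm_eq_abs]
    refine mul_le_mul_of_nonneg_right (abs_le.2 ⟨?_, ?_⟩) (hk.nonneg _)
    · nlinarith [sq_nonneg (f q.1 - f q.2 + (g q.1 - g q.2))]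
    · nlinarith [sq_nonneg (f q.1 - f q.2 - (g q.1 - g q.2))]

variable [SFinite μ]

theorem integrable_dirichletIntegrand_iff [μ.IsAddLeftInvariant] (hk : IsSymmLevyKernel k μ)
    (f g : E → ℝ) :
    Integrable (dirichletIntegrand k f g) (μ.prod μ) ↔
      Integrable (fun q : E × E => (f q.1 - f (q.1 + q.2)) * (g q.1 - g (q.1 + q.2)) * k q.2)
        (μ.prod μ) := by
  rw [← (measurePreserving_prod_add μ μ).integrable_comp_emb
    (MeasurableEquiv.shearAddRight E).measurableEmbedding]
  simp [Function.comp_def, dirichletIntegrand, hk.even]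

theorem integral_dirichletIntegrand [μ.IsAddLeftInvariant] (hk : IsSymmLevyKernel k μ)
    (f g : E → ℝ) :
    ∫ q, dirichletIntegrand k f g q ∂μ.prod μ =
      ∫ q : E × E, (f q.1 - f (q.1 + q.2)) * (g q.1 - g (q.1 + q.2)) * k q.2 ∂μ.prod μ := by
  rw [← (measurePreserving_prod_add μ μ).integral_comp
    (MeasurableEquiv.shearAddRight E).measurableEmbedding]
  simp [dirichletIntegrand, hk.even]

end DirichletForm

theorem integrableOn_le_norm (hk : IsSymmLevyKernel k μ) {ε : ℝ} (hε : 0 < ε) :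
    IntegrableOn k {z | ε ≤ ‖z‖} μ := by
  have hmin : 0 < min 1 (ε ^ 2) := by positivity
  refine (hk.integrable_min.const_mul (min 1 (ε ^ 2))⁻¹).integrableOn.mono'
    hk.measurable.aestronglyMeasurable (ae_restrict_of_forall_mem
      (measurableSet_le measurable_const measurable_norm) fun z (hz : ε ≤ ‖z‖) => ?_)
  rw [Real.norm_of_nonneg (hk.nonneg z), inv_mul_eq_div, le_div_iff₀ hmin, mul_comm]
  gcongr
  exact hk.nonneg z

theorem levyOpTrunc_eq_setIntegral_sub [μ.IsAddLeftInvariant] (hk : IsSymmLevyKernel k μ)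
    (G : E → ℝ) (ε : ℝ) (u : E) :
    levyOpTrunc μ k G ε u = ∫ z in {z | ε ≤ ‖z‖}, (G (u + z) - G u) * k z ∂μ := by
  have h := (measurePreserving_add_left μ u).setIntegral_preimage_emb
    (MeasurableEquiv.addLeft u).measurableEmbedding (fun v => (G v - G u) * k (u - v))
    {v | ε ≤ ‖u - v‖}
  simpa [levyOpTrunc, hk.even] using h.symm

theorem levyOpTrunc_eq_setIntegral_secondDiff [μ.IsAddLeftInvariant] [μ.IsNegInvariant]
    (hk : IsSymmLevyKernel k μ) {G : E → ℝ} (hG : Measurable G) {B : ℝ} (hB : ∀ x, |G x| ≤ B)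
    {ε : ℝ} (hε : 0 < ε) (u : E) :
    levyOpTrunc μ k G ε u = 1 / 2 * ∫ z in {z | ε ≤ ‖z‖}, secondDiff G u z * k z ∂μ := by
  have hS : MeasurableSet {z : E | ε ≤ ‖z‖} := measurableSet_le measurable_const measurable_norm
  have hfwd : IntegrableOn (fun z => (G (u + z) - G u) * k z) {z | ε ≤ ‖z‖} μ :=
    (hk.integrableOn_le_norm hε).bdd_mul (c := B + B)
      (hG.comp (measurable_const_add u) |>.sub_const (G u)).aestronglyMeasurable
      (ae_of_all _ fun z => (norm_sub_le _ _).trans (add_le_add (hB _) (hB _)))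
  have hneg := (Measure.measurePreserving_neg μ).restrict_preimage hS
  have hneg_set : Neg.neg ⁻¹' {z : E | ε ≤ ‖z‖} = {z | ε ≤ ‖z‖} := by ext; simp
  rw [hneg_set] at hneg
  have hbwd : IntegrableOn (fun z => (G (u - z) - G u) * k z) {z | ε ≤ ‖z‖} μ := by
    simpa [IntegrableOn, Function.comp_def, hk.even, ← sub_eq_add_neg] using
      hneg.integrable_comp_of_integrable hfwd
  have hbwd_eq : ∫ z in {z | ε ≤ ‖z‖}, (G (u - z) - G u) * k z ∂μ =
      ∫ z in {z | ε ≤ ‖z‖}, (G (u + z) - G u) * k z ∂μ := by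
    simpa [hk.even, ← sub_eq_add_neg] using
      hneg.integral_comp (MeasurableEquiv.neg E).measurableEmbedding
        fun z => (G (u + z) - G u) * k z
  simp only [secondDiff, add_mul]
  rw [hk.levyOpTrunc_eq_setIntegral_sub, integral_add hfwd hbwd, hbwd_eq]
  ring

theorem tendsto_levyOpTrunc [μ.IsAddLeftInvariant] [μ.IsNegInvariant] [NullSingletonClass μ]
    (hk : IsSymmLevyKernel k μ) {G : E → ℝ} (hG : Measurable G) {B : ℝ} (hB : ∀ x, |G x| ≤ B)
    {u : E} (hu : Integrable (fun z => secondDiff G u z * k z) μ) :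
    Tendsto (fun ε => levyOpTrunc μ k G ε u) (𝓝[>] (0 : ℝ)) (𝓝 (levyOp μ k G u)) := by
  refine ((aeCover_le_norm.integral_tendsto_of_countably_generated hu).const_mul (1 / 2)).congr' ?_
  filter_upwards [self_mem_nhdsWithin] with ε hε
  exact (hk.levyOpTrunc_eq_setIntegral_secondDiff hG hB hε u).symm

variable [NormedSpace ℝ E] [FiniteDimensional ℝ E] [μ.IsAddHaarMeasure]
  {G : E → ℝ} {M : NNReal}

theorem integrable_secondDiff_mul (hk : IsSymmLevyKernel k μ) (hG : Differentiable ℝ G)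
    (hG' : LipschitzWith M (fderiv ℝ G)) (hGc : HasCompactSupport G) :
    Integrable (fun q : E × E => secondDiff G q.1 q.2 * k q.2) (μ.prod μ) := by
  have hGi : Integrable G μ := hG.continuous.integrable_of_hasCompactSupport hGc
  have hmeas : AEStronglyMeasurable (fun q : E × E => secondDiff G q.1 q.2 * k q.2) (μ.prod μ) :=
    ((continuous_secondDiff hG.continuous).measurable.mul
      (hk.measurable.comp measurable_snd)).aestronglyMeasurable
  obtain ⟨K, hK⟩ := exists_integral_norm_secondDiff_le_mul_min (μ := μ) hG hG' hGc
  refine (integrable_prod_iff' hmeas).2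
    ⟨ae_of_all _ fun z => (integrable_secondDiff hGi z).mul_const (k z), ?_⟩
  refine (hk.integrable_min.const_mul K).mono' hmeas.norm.prod_swap.integral_prod_right'
    (ae_of_all _ fun z => ?_)
  simp only [norm_mul, Real.norm_of_nonneg (hk.nonneg z), integral_mul_const]
  rw [Real.norm_of_nonneg (integral_nonneg fun u => norm_nonneg _), ← mul_assoc]
  exact mul_le_mul_of_nonneg_right (hK z) (hk.nonneg z)

theorem integrable_mul_secondDiff_mul (hk : IsSymmLevyKernel k μ) {ρ : E → ℝ}
    (hρ : AEStronglyMeasurable ρ μ) {C : ℝ} (hC : ∀ᵐ u ∂μ, |ρ u| ≤ C) (hG : Differentiable ℝ G)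
    (hG' : LipschitzWith M (fderiv ℝ G)) (hGc : HasCompactSupport G) :
    Integrable (fun q : E × E => ρ q.1 * (secondDiff G q.1 q.2 * k q.2)) (μ.prod μ) :=
  (hk.integrable_secondDiff_mul hG hG' hGc).bdd_mul hρ.comp_fst
    (Measure.quasiMeasurePreserving_fst.ae hC)

-- Discrete summation by parts with `ρ = G` turns the slice energies into integrals of `G` against
-- its second differences, so no separate estimate on first differences is needed.
theorem integrable_dirichletIntegrand_self (hk : IsSymmLevyKernel k μ) (hG : Differentiable ℝ G)
    (hG' : LipschitzWith M (fderiv ℝ G)) (hGc : HasCompactSupport G) :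
    Integrable (dirichletIntegrand k G G) (μ.prod μ) := by
  have hGcont : Continuous G := hG.continuous
  have hGm : AEStronglyMeasurable G μ := hGcont.aestronglyMeasurable
  have hGi : Integrable G μ := hGcont.integrable_of_hasCompactSupport hGc
  obtain ⟨B, hB⟩ := hGc.exists_bound_of_continuous hGcont
  have hdiff (z : E) : Integrable (fun u => (G u - G (u + z)) * (G u - G (u + z))) μ :=
    (hGi.sub (hGi.comp_add_right z)).bdd_mul (c := B + B) (by fun_prop) (ae_of_all _ fun u =>
      (norm_sub_le _ _).trans (add_le_add (hB _) (hB _)))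
  have hkm := hk.measurable
  have hGmeas := hGcont.measurable
  have hmeas : Measurable fun q : E × E =>
      (G q.1 - G (q.1 + q.2)) * (G q.1 - G (q.1 + q.2)) * k q.2 := by fun_prop
  refine (hk.integrable_dirichletIntegrand_iff G G).2 ((integrable_prod_iff'
    hmeas.aestronglyMeasurable).2 ⟨ae_of_all _ fun z => (hdiff z).mul_const (k z), ?_⟩)
  refine (hk.integrable_mul_secondDiff_mul hGm (ae_of_all _ hB) hG hG'
    hGc).integral_prod_right.neg.congr (ae_of_all _ fun z => ?_)
  have hnorm (u : E) : ‖(G u - G (u + z)) * (G u - G (u + z)) * k z‖ =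
      (G u - G (u + z)) * (G u - G (u + z)) * k z :=
    Real.norm_of_nonneg (mul_nonneg (mul_self_nonneg _) (hk.nonneg z))
  simp only [Pi.neg_apply, hnorm, ← mul_assoc, integral_mul_const]
  rw [integral_sub_mul_sub_eq_neg_integral_mul_secondDiff hGm (ae_of_all _ hB) hGi, neg_mul]

theorem integral_mul_levyOp (hk : IsSymmLevyKernel k μ) {ρ : E → ℝ}
    (hρ : AEStronglyMeasurable ρ μ) {C : ℝ} (hC : ∀ᵐ u ∂μ, |ρ u| ≤ C)
    (hρE : Integrable (dirichletIntegrand k ρ ρ) (μ.prod μ)) (hG : Differentiable ℝ G)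
    (hG' : LipschitzWith M (fderiv ℝ G)) (hGc : HasCompactSupport G) :
    ∫ u, ρ u * levyOp μ k G u ∂μ = -(1 / 2) * ∫ q, dirichletIntegrand k G ρ q ∂μ.prod μ := by
  have hGi : Integrable G μ := hG.continuous.integrable_of_hasCompactSupport hGc
  have hform := (hk.integrable_dirichletIntegrand_iff G ρ).1 <| hk.integrable_dirichletIntegrand
    hGi.aestronglyMeasurable hρ (hk.integrable_dirichletIntegrand_self hG hG' hGc) hρE
  have hpair := hk.integrable_mul_secondDiff_mul hρ hC hG hG' hGc
  calc ∫ u, ρ u * levyOp μ k G u ∂μ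
      = 1 / 2 * ∫ u, ∫ z, ρ u * (secondDiff G u z * k z) ∂μ ∂μ := by
        rw [← integral_const_mul]
        congr 1 with u
        rw [levyOp, integral_const_mul]
        ring
    _ = 1 / 2 * ∫ z, ∫ u, ρ u * (secondDiff G u z * k z) ∂μ ∂μ := by
        rw [integral_integral_swap hpair]
    _ = 1 / 2 * ∫ z, -∫ u, (G u - G (u + z)) * (ρ u - ρ (u + z)) * k z ∂μ ∂μ := by
        simp only [← mul_assoc, integral_mul_const,
          integral_sub_mul_sub_eq_neg_integral_mul_secondDiff hρ hC hGi, neg_mul, neg_neg]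
    _ = -(1 / 2) * ∫ q, dirichletIntegrand k G ρ q ∂μ.prod μ := by
        rw [integral_neg, hk.integral_dirichletIntegrand, integral_prod_symm _ hform]
        ring

end IsSymmLevyKernel

theorem integrableOn_Ioi_min_one_sq_mul_rpow {γ : ℝ} (hγ : γ ∈ Ioo (0 : ℝ) 2) :
    IntegrableOn (fun r : ℝ => min 1 (r ^ 2) * r ^ (-1 - γ)) (Ioi 0) := by
  have hnear : IntegrableOn (fun r : ℝ => min 1 (r ^ 2) * r ^ (-1 - γ)) (Ioc 0 1) := by
    have hpow : IntegrableOn (fun r : ℝ => r ^ (1 - γ)) (Ioc 0 1) :=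
      (intervalIntegrable_iff_integrableOn_Ioc_of_le zero_le_one).1
        (intervalIntegral.intervalIntegrable_rpow' (by linarith [hγ.2]))
    refine hpow.congr_fun (fun r hr => ?_) measurableSet_Ioc
    rw [min_eq_right (pow_le_one₀ hr.1.le hr.2), ← Real.rpow_natCast, ← Real.rpow_add hr.1]
    ring_nf
  have hfar : IntegrableOn (fun r : ℝ => min 1 (r ^ 2) * r ^ (-1 - γ)) (Ioi 1) := by
    refine (integrableOn_Ioi_rpow_of_lt (a := -1 - γ) (by linarith [hγ.1]) one_pos).congr_fun
      (fun r (hr : 1 < r) => ?_) measurableSet_Ioi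
    rw [min_eq_left (one_le_pow₀ hr.le), one_mul]
  rw [← Ioc_union_Ioi_eq_Ioi zero_le_one]
  exact hnear.union hfar

theorem isSymmLevyKernel_div_norm_rpow [NormedSpace ℝ E] [FiniteDimensional ℝ E] [Nontrivial E]
    [μ.IsAddHaarMeasure] {c γ : ℝ} (hc : 0 ≤ c) (hγ : γ ∈ Ioo (0 : ℝ) 2) :
    IsSymmLevyKernel (fun z : E => c / ‖z‖ ^ (Module.finrank ℝ E + γ)) μ where
  measurable := by fun_prop
  nonneg z := by positivity
  even z := by rw [norm_neg]
  integrable_min := by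
    rw [integrable_fun_norm_addHaar μ
      (f := fun r => min 1 (r ^ 2) * (c / r ^ (Module.finrank ℝ E + γ)))]
    refine IntegrableOn.congr_fun ((integrableOn_Ioi_min_one_sq_mul_rpow hγ).const_mul c)
      (fun r (hr : 0 < r) => ?_) measurableSet_Ioi
    have hdim : ((Module.finrank ℝ E - 1 : ℕ) : ℝ) = Module.finrank ℝ E - 1 := by
      rw [Nat.cast_sub Module.finrank_pos, Nat.cast_one]
    have hpow : r ^ (-1 - γ) =
        r ^ (Module.finrank ℝ E - 1) / r ^ (Module.finrank ℝ E + γ) := by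
      rw [← Real.rpow_natCast, hdim, ← Real.rpow_sub hr]
      congr 1
      ring
    rw [hpow, smul_eq_mul]
    ring

theorem stmt3_general [NormedSpace ℝ E] [FiniteDimensional ℝ E] [μ.IsAddHaarMeasure]
    [NullSingletonClass μ] {k : E → ℝ} (hk : IsSymmLevyKernel k μ)
    {ρ : E → ℝ} (hρ : AEStronglyMeasurable ρ μ) {C : ℝ} (hC : ∀ᵐ u ∂μ, |ρ u| ≤ C)
    (hρE : Integrable (dirichletIntegrand k ρ ρ) (μ.prod μ))
    {G : E → ℝ} {M : NNReal} (hG : Differentiable ℝ G) (hG' : LipschitzWith M (fderiv ℝ G))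
    (hGc : HasCompactSupport G) {L : E → ℝ}
    (hL : ∀ᵐ u ∂μ, Tendsto (fun ε => levyOpTrunc μ k G ε u) (𝓝[>] (0 : ℝ)) (𝓝 (L u))) :
    ∫ u, ρ u * L u ∂μ = -(1 / 2) * ∫ q, dirichletIntegrand k G ρ q ∂μ.prod μ := by
  obtain ⟨B, hB⟩ := hGc.exists_bound_of_continuous hG.continuous
  rw [← hk.integral_mul_levyOp hρ hC hρE hG hG' hGc]
  refine integral_congr_ae ?_
  filter_upwards [hL, (hk.integrable_secondDiff_mul hG hG' hGc).prod_right_ae] with u hLu hu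
  rw [tendsto_nhds_unique hLu (hk.tendsto_levyOpTrunc hG.continuous.measurable hB hu)]

theorem fracLapTrunc_eq_levyOpTrunc (c γ : ℝ) (G : ℝ → ℝ) (ε u : ℝ) :
    fracLapTrunc c γ G ε u = levyOpTrunc volume (fun z => c / ‖z‖ ^ (1 + γ)) G ε u := by
  simp only [fracLapTrunc, levyOpTrunc, ← integral_const_mul, Real.norm_eq_abs, add_comm γ 1]
  congr 1 with v
  ring

theorem dirichletIntegrand_div_norm_rpow (c γ : ℝ) (f g : ℝ → ℝ) :
    dirichletIntegrand (fun z => c / ‖z‖ ^ (1 + γ)) f g = fun q =>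
      c * ((f q.1 - f q.2) * (g q.1 - g q.2) / |q.1 - q.2| ^ (1 + γ)) := by
  ext q
  rw [dirichletIntegrand, Real.norm_eq_abs]
  ring

theorem stmt3 (γ c : ℝ) (hγ : γ ∈ Set.Ioo (0 : ℝ) 2) (hc : 0 < c)
    (hprob : HasSum (transP c γ) 1)
    (ρ : ℝ → ℝ) (hρmeas : Measurable ρ) (hρbdd : ∃ C : ℝ, ∀ᵐ u : ℝ, |ρ u| ≤ C)
    (hρsem : Integrable (fun q : ℝ × ℝ => (ρ q.1 - ρ q.2) ^ 2 / |q.1 - q.2| ^ (1 + γ)))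
    (G : ℝ → ℝ) (hG : ContDiff ℝ 2 G) (hGc : HasCompactSupport G)
    (L : ℝ → ℝ)
    (hL : ∀ u : ℝ, Tendsto (fun ε => fracLapTrunc c γ G ε u) (𝓝[>] (0 : ℝ)) (𝓝 (L u))) :
    ∫ u : ℝ, ρ u * L u =
      -(c / 2) * ∫ q : ℝ × ℝ, (G q.1 - G q.2) * (ρ q.1 - ρ q.2) / |q.1 - q.2| ^ (1 + γ) := by
  obtain ⟨C, hC⟩ := hρbdd
  obtain ⟨M, hG'⟩ := (hG.fderiv_right (m := 1) (by norm_num)).lipschitzWith_of_hasCompactSupport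
    (hGc.fderiv ℝ) one_ne_zero
  have hk : IsSymmLevyKernel (fun z : ℝ => c / ‖z‖ ^ (1 + γ)) volume := by
    simpa using isSymmLevyKernel_div_norm_rpow (E := ℝ) hc.le hγ
  have hρE : Integrable (dirichletIntegrand (fun z => c / ‖z‖ ^ (1 + γ)) ρ ρ) := by
    simpa only [dirichletIntegrand_div_norm_rpow, ← sq] using hρsem.const_mul c
  simp only [fracLapTrunc_eq_levyOpTrunc] at hL
  have h := stmt3_general hk hρmeas.aestronglyMeasurable hC hρE (hG.differentiable two_ne_zero) hG'
    hGc (ae_of_all _ hL)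
  simp only [dirichletIntegrand_div_norm_rpow, integral_const_mul] at h
  rw [h, Measure.volume_eq_prod]
  ring
end

section
/- Let γ ∈ (0,2), T > 0, let S ⊆ S₀ be a set of bonds satisfying the thin-barrier condition: there exists δ ∈ [0,1] with δ > γ−1 such that ∑_{{x,y}∈S} |y−x|^δ p(y−x) < ∞. Then for every G ∈ S_Dif, lim_{n→∞} n^{γ−1} ∑_{{x,y}∈S} p(y−x) · sup_{s∈[0,T]} |G(s, y/n) − G(s, x/n)| = 0. -/
open MeasureTheory Filter Set Topology

/-- `G ∈ S_Dif = P([0,T], C_c^∞(ℝ))`. -/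
def SDifMem (G : ℝ → ℝ → ℝ) : Prop :=
  ∃ (k : ℕ) (a : ℕ → ℝ → ℝ),
    (∀ j : ℕ, ContDiff ℝ (⊤ : ℕ∞) (a j) ∧ HasCompactSupport (a j)) ∧
    ∀ t u : ℝ, G t u = ∑ j ∈ Finset.range (k + 1), a j u * t ^ j

/-!
Interpolating between boundedness and the Lipschitz property, each `G ∈ S_Dif` is `δ`-Hölder in
space, uniformly over bounded sets of times. A bond `{x, y}` therefore contributes at most
`K n^(-δ) |y - x|^δ p(y - x)` to the sum at scale `n`. The thin-barrier condition bounds the sum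
by a multiple of `n^(-δ)`, and `n^(γ - 1) n^(-δ) → 0` because `γ - 1 < δ`.
-/

open scoped NNReal

section Holder

variable {X Y : Type*} [PseudoMetricSpace X]

theorem exists_holderWith_of_lipschitzWith_of_isBounded_range [PseudoMetricSpace Y] {f : X → Y}
    {C r : ℝ≥0} (hf : LipschitzWith C f) (hb : Bornology.IsBounded (range f)) (hr : r ≤ 1) :
    ∃ K, HolderWith K r f := by
  obtain ⟨D, hD⟩ := Metric.isBounded_range_iff.1 hb
  have hD₀ : HolderWith D.toNNReal 0 f := fun x y => by
    simpa only [NNReal.coe_zero, ENNReal.rpow_zero, mul_one, edist_dist, ENNReal.ofReal] using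
      ENNReal.ofReal_le_ofReal (hD x y)
  exact ⟨_, hD₀.of_le_of_le hf.holderWith zero_le hr⟩

theorem exists_holderWith_of_contDiff_of_hasCompactSupport {𝕜 E F : Type*} [RCLike 𝕜]
    [NormedAddCommGroup E] [NormedSpace 𝕜 E] [NormedAddCommGroup F] [NormedSpace 𝕜 F]
    {f : E → F} {n : WithTop ℕ∞} {r : ℝ≥0} (hf : ContDiff 𝕜 n f) (hn : n ≠ 0)
    (hs : HasCompactSupport f) (hr : r ≤ 1) : ∃ K, HolderWith K r f := by
  obtain ⟨C, hC⟩ := ContDiff.lipschitzWith_of_hasCompactSupport hs hf hn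
  exact exists_holderWith_of_lipschitzWith_of_isBounded_range hC
    (hs.isCompact_range hf.continuous).isBounded hr

theorem holderWith_sum [SeminormedAddCommGroup Y] {ι : Type*} (s : Finset ι) {f : ι → X → Y}
    {K : ι → ℝ≥0} {r : ℝ≥0} (hf : ∀ i ∈ s, HolderWith (K i) r (f i)) :
    HolderWith (∑ i ∈ s, K i) r (∑ i ∈ s, f i) := by
  classical
  induction s using Finset.induction_on with
  | empty => simpa only [Finset.sum_empty] using HolderWith.zero
  | insert i s hi ih =>
    rw [Finset.sum_insert hi, Finset.sum_insert hi]
    exact (hf i (Finset.mem_insert_self i s)).add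
      (ih fun j hj => hf j (Finset.mem_insert_of_mem hj))

theorem biSup_dist_le_of_holderWith [PseudoMetricSpace Y] {τ : Type*} {I : Set τ}
    {f : τ → X → Y} {K r : ℝ≥0} (hf : ∀ t ∈ I, HolderWith K r (f t)) (x y : X) :
    ⨆ t ∈ I, dist (f t x) (f t y) ≤ K * dist x y ^ (r : ℝ) :=
  have hbound_nonneg : 0 ≤ K * dist x y ^ (r : ℝ) := by positivity
  Real.iSup_le (fun t => Real.iSup_le (fun ht => (hf t ht).dist_le x y) hbound_nonneg)
    hbound_nonneg

end Holder

theorem SDifMem.exists_holderWith {G : ℝ → ℝ → ℝ} (hG : SDifMem G) {I : Set ℝ}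
    (hI : Bornology.IsBounded I) {r : ℝ≥0} (hr : r ≤ 1) :
    ∃ K : ℝ≥0, ∀ t ∈ I, HolderWith K r (G t) := by
  obtain ⟨k, a, ha, hG⟩ := hG
  obtain ⟨R, hR⟩ := hI.exists_norm_le
  choose K hK using fun j =>
    exists_holderWith_of_contDiff_of_hasCompactSupport (ha j).1 (by simp) (ha j).2 hr
  refine ⟨∑ j ∈ Finset.range (k + 1), K j * R.toNNReal ^ j, fun t ht => ?_⟩
  have hGt : G t = ∑ j ∈ Finset.range (k + 1), t ^ j • a j := by
    ext u
    simp [hG, mul_comm]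
  have htR : ‖t‖₊ ≤ R.toNNReal := NNReal.le_toNNReal_of_coe_le (hR t ht)
  rw [hGt]
  refine holderWith_sum _ fun j _ => ((hK j).smul (t ^ j)).mono ?_
  rw [nnnorm_pow]
  gcongr

theorem tendsto_rpow_mul_tsum_zero_of_le {ι : Type*} {f : ℕ → ι → ℝ} {g : ι → ℝ} {α δ : ℝ}
    (hαδ : α < δ) (hf : ∀ n i, 0 ≤ f n i) (hg : Summable g)
    (hfg : ∀ n i, f n i ≤ (n : ℝ) ^ (-δ) * g i) :
    Tendsto (fun n : ℕ => (n : ℝ) ^ α * ∑' i, f n i) atTop (𝓝 0) := by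
  have htsum (n : ℕ) : ∑' i, f n i ≤ (n : ℝ) ^ (-δ) * ∑' i, g i := by
    have hdom := hg.mul_left ((n : ℝ) ^ (-δ))
    rw [← tsum_mul_left]
    exact (hdom.of_nonneg_of_le (hf n) (hfg n)).tsum_le_tsum (hfg n) hdom
  have hlim : Tendsto (fun n : ℕ => (n : ℝ) ^ (-(δ - α)) * ∑' i, g i) atTop (𝓝 0) := by
    simpa only [zero_mul, Function.comp_def] using
      ((tendsto_rpow_neg_atTop (sub_pos.2 hαδ)).comp tendsto_natCast_atTop_atTop).mul_const
        (∑' i, g i)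
  refine squeeze_zero' (.of_forall fun n => ?_) ?_ hlim
  · exact mul_nonneg (by positivity) (tsum_nonneg (hf n))
  filter_upwards [eventually_gt_atTop 0] with n hn
  calc (n : ℝ) ^ α * ∑' i, f n i
      ≤ (n : ℝ) ^ α * ((n : ℝ) ^ (-δ) * ∑' i, g i) := by grw [htsum n]
    _ = (n : ℝ) ^ (-(δ - α)) * ∑' i, g i := by
      rw [← mul_assoc, ← Real.rpow_add (by positivity)]
      ring_nf

theorem dist_inv_smul_rpow {E : Type*} [SeminormedAddCommGroup E] [NormedSpace ℝ E] {a : ℝ}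
    (ha : 0 ≤ a) (r : ℝ) (x y : E) :
    dist (a⁻¹ • x) (a⁻¹ • y) ^ r = a ^ (-r) * dist x y ^ r := by
  rw [dist_smul₀, Real.norm_of_nonneg (inv_nonneg.2 ha),
    Real.mul_rpow (inv_nonneg.2 ha) dist_nonneg, Real.inv_rpow ha, Real.rpow_neg ha]

theorem tendsto_rpow_mul_tsum_mul_biSup_dist {ι τ E F : Type*} [SeminormedAddCommGroup E]
    [NormedSpace ℝ E] [PseudoMetricSpace F] {w : ι → ℝ} (hw : ∀ i, 0 ≤ w i) {x y : ι → E}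
    {α : ℝ} {r : ℝ≥0} (hα : α < r) (hsum : Summable fun i => dist (x i) (y i) ^ (r : ℝ) * w i)
    {I : Set τ} {G : τ → E → F} {K : ℝ≥0} (hG : ∀ t ∈ I, HolderWith K r (G t)) :
    Tendsto (fun n : ℕ => (n : ℝ) ^ α *
        ∑' i, w i * ⨆ t ∈ I, dist (G t ((n : ℝ)⁻¹ • x i)) (G t ((n : ℝ)⁻¹ • y i)))
      atTop (𝓝 0) := by
  refine tendsto_rpow_mul_tsum_zero_of_le hα (fun n i => ?_) (hsum.mul_left (K : ℝ)) fun n i => ?_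
  · exact mul_nonneg (hw i)
      (Real.iSup_nonneg fun _ => Real.iSup_nonneg fun _ => dist_nonneg)
  calc w i * ⨆ t ∈ I, dist (G t ((n : ℝ)⁻¹ • x i)) (G t ((n : ℝ)⁻¹ • y i))
      ≤ w i * (K * dist ((n : ℝ)⁻¹ • x i) ((n : ℝ)⁻¹ • y i) ^ (r : ℝ)) :=
        mul_le_mul_of_nonneg_left (biSup_dist_le_of_holderWith hG _ _) (hw i)
    _ = (n : ℝ) ^ (-r : ℝ) * (K * (dist (x i) (y i) ^ (r : ℝ) * w i)) := by
        rw [dist_inv_smul_rpow n.cast_nonneg]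
        ring

theorem transP_nonneg {c : ℝ} (hc : 0 ≤ c) (γ : ℝ) (z : ℤ) : 0 ≤ transP c γ z := by
  unfold transP
  split_ifs <;> positivity

theorem stmt13_general {p : ℤ → ℝ} (hp : ∀ z, 0 ≤ p z) {S : Set (ℤ × ℤ)} {α δ : ℝ}
    (hδ : δ ∈ Set.Icc (0 : ℝ) 1) (hα : α < δ)
    (hthin : Summable fun b : S => |((b : ℤ × ℤ).2 - (b : ℤ × ℤ).1 : ℝ)| ^ δ *
      p ((b : ℤ × ℤ).2 - (b : ℤ × ℤ).1))
    {I : Set ℝ} (hI : Bornology.IsBounded I) {G : ℝ → ℝ → ℝ} (hG : SDifMem G) :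
    Tendsto (fun n : ℕ => (n : ℝ) ^ α *
        ∑' b : S, p ((b : ℤ × ℤ).2 - (b : ℤ × ℤ).1) *
          ⨆ s ∈ I, |G s (((b : ℤ × ℤ).2 : ℝ) / n) - G s (((b : ℤ × ℤ).1 : ℝ) / n)|)
      atTop (𝓝 0) := by
  lift δ to ℝ≥0 using hδ.1
  obtain ⟨K, hK⟩ := hG.exists_holderWith hI (r := δ) (mod_cast hδ.2)
  simpa only [Real.dist_eq, smul_eq_mul, ← div_eq_inv_mul] using
    tendsto_rpow_mul_tsum_mul_biSup_dist (fun b : S => hp (b.1.2 - b.1.1))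
      (x := fun b => (b.1.2 : ℝ)) (y := fun b => (b.1.1 : ℝ)) hα hthin hK

theorem stmt13 (γ c T : ℝ) (hγ : γ ∈ Set.Ioo (0 : ℝ) 2) (hc : 0 < c)
    (hprob : HasSum (transP c γ) 1) (hT : 0 < T)
    -- a bond {x,y} with x < 0 ≤ y is encoded as the ordered pair (x,y)
    (S : Set (ℤ × ℤ)) (hS : S ⊆ {b : ℤ × ℤ | b.1 < 0 ∧ 0 ≤ b.2})
    (hthin : ∃ δ ∈ Set.Icc (0 : ℝ) 1, γ - 1 < δ ∧
      Summable (fun b : S => |((b : ℤ × ℤ).2 - (b : ℤ × ℤ).1 : ℝ)| ^ δ *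
        transP c γ ((b : ℤ × ℤ).2 - (b : ℤ × ℤ).1)))
    (G : ℝ → ℝ → ℝ) (hG : SDifMem G) :
    Tendsto (fun n : ℕ => (n : ℝ) ^ (γ - 1) *
        ∑' b : S, transP c γ ((b : ℤ × ℤ).2 - (b : ℤ × ℤ).1) *
          ⨆ s ∈ Set.Icc (0 : ℝ) T,
            |G s (((b : ℤ × ℤ).2 : ℝ) / n) - G s (((b : ℤ × ℤ).1 : ℝ) / n)|)
      atTop (𝓝 0) := by
  obtain ⟨δ, hδ, hγδ, hsum⟩ := hthin
  exact stmt13_general (transP_nonneg hc.le γ) hδ hγδ hsum (Metric.isBounded_Icc 0 T) hG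
end
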